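/- arXiv:1506.03729 — 2 statements merged into one kernel-verified Lean document; each statement's English description precedes it below -/
import Mathlib

section
/- Let k ≥ 1, let c₁, c₂ ∈ ℝ^k have all entries positive with c₁ ≠ c₂, and let p₁, p₂ > 0. Then there exist a constant c > 0 and n₀ ∈ ℕ such that for every integer n ≥ n₀, ∑_{x ∈ ℕ^k} min(p₁ · P_{c₁ ln n}(x), p₂ · P_{c₂ ln n}(x)) ≥ c · n^{−D₊(c₁,c₂)} · (ln n)^{−k/2}. -/
open scoped BigOperators

/-- Multivariate Poisson probability mass function on `ℕ^k` with mean vector `lam`. -/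
noncomputable def poissonPMF {k : ℕ} (lam : Fin k → ℝ) (x : Fin k → ℕ) : ℝ :=
  ∏ i, lam i ^ x i * Real.exp (-lam i) / (Nat.factorial (x i))

/-- The CH-divergence `D₊(μ, ν) = max_{t ∈ [0,1]} ∑ i (t μ i + (1-t) ν i − μ i ^ t ν i ^ (1-t))`. -/
noncomputable def CHdiv {k : ℕ} (μ ν : Fin k → ℝ) : ℝ :=
  sSup ((fun t : ℝ => ∑ i, (t * μ i + (1 - t) * ν i - μ i ^ t * ν i ^ (1 - t))) ''
    Set.Icc (0 : ℝ) 1)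

/-!
A single lattice point already carries enough mass. By Stirling's formula a Poisson variable of
mean `m L` takes the value `⌊z L⌋` with probability at least of order
`exp (-L I(m, z)) / √L`, where `I(m, z) = z log (z / m) + m - z`. So one needs a vector `z` with
`∑ I(c₁, z)` and `∑ I(c₂, z)` both at most `D₊(c₁, c₂)`. Put `z = c₁ ^ t c₂ ^ (1 - t)`, and let `F`
be the function maximized in `D₊`. The two sums are then the values at `1` and at `0` of the tangent
line to `F` at `t`. Since `F 0 = F 1 = 0`, Rolle's theorem provides a `t` with `F' t = 0`, for which
both sums equal `F t ≤ D₊(c₁, c₂)`.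
-/

open Filter

section PoissonRate

/-- The Cramér rate function of the Poisson distribution of mean `m`, which is also the relative
entropy of the Poisson distribution of mean `z` with respect to that of mean `m`. -/
noncomputable def poissonRate (m z : ℝ) : ℝ := z * Real.log (z / m) + m - z

lemma poissonRate_mul_mul (m z : ℝ) {L : ℝ} (hL : L ≠ 0) :
    poissonRate (m * L) (z * L) = L * poissonRate m z := by
  rw [poissonRate, poissonRate, mul_div_mul_right _ _ hL]
  ring

lemma poissonRate_le_add_abs_log {m x y : ℝ} (hm : 0 < m) (hx : 0 < x) (hxy : x ≤ y)
    (hyx : y ≤ x + 1) :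
    poissonRate m x ≤ poissonRate m y + |Real.log (y / m)| + 1 := by
  have hlog : x * Real.log (x / m) ≤ x * Real.log (y / m) := by gcongr
  have hshift : (x - y) * Real.log (y / m) ≤ |Real.log (y / m)| := by
    calc (x - y) * Real.log (y / m) ≤ |x - y| * |Real.log (y / m)| := by
          rw [← abs_mul]
          exact le_abs_self _
      _ ≤ 1 * |Real.log (y / m)| := by
          gcongr
          exact abs_le.2 ⟨by linarith, by linarith⟩
      _ = |Real.log (y / m)| := one_mul _
  unfold poissonRate
  linarith

lemma exp_neg_poissonRate_natCast {m : ℝ} (hm : 0 < m) {x : ℕ} (hx : x ≠ 0) :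
    Real.exp (-poissonRate m x) = m ^ x * Real.exp (-m) / (x / Real.exp 1) ^ x := by
  have hpow : Real.exp (x * Real.log (x / m)) = (x / m) ^ x := by
    rw [Real.exp_nat_mul, Real.exp_log (by positivity)]
  have hsplit : -poissonRate m x = x + -m - x * Real.log (x / m) := by
    unfold poissonRate
    ring
  rw [hsplit, Real.exp_sub, Real.exp_add, hpow, div_pow, div_pow, ← Real.exp_nat_mul, mul_one]
  field_simp

end PoissonRate

section PoissonLowerBound

lemma factorial_le_exp_one_mul_sqrt_mul_pow {n : ℕ} (hn : n ≠ 0) :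
    (n.factorial : ℝ) ≤ Real.exp 1 * √n * (n / Real.exp 1) ^ n := by
  obtain ⟨m, rfl⟩ := Nat.exists_eq_succ_of_ne_zero hn
  have hseq : Stirling.stirlingSeq (m + 1) ≤ Real.exp 1 / √2 :=
    Stirling.stirlingSeq_one ▸ Stirling.stirlingSeq'_antitone (Nat.zero_le m)
  rw [Stirling.stirlingSeq, div_le_iff₀ (by positivity)] at hseq
  refine hseq.trans_eq ?_
  rw [Real.sqrt_mul zero_le_two]
  field_simp

lemma exp_neg_poissonRate_div_le {m : ℝ} (hm : 0 < m) {x : ℕ} (hx : x ≠ 0) :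
    Real.exp (-poissonRate m x) / (Real.exp 1 * √x) ≤
      m ^ x * Real.exp (-m) / x.factorial := by
  rw [exp_neg_poissonRate_natCast hm hx, div_div]
  gcongr
  rw [mul_comm]
  exact factorial_le_exp_one_mul_sqrt_mul_pow hx

lemma exists_le_poisson_floor {m z : ℝ} (hm : 0 < m) (hz : 0 < z) :
    ∃ c : ℝ, 0 < c ∧ ∀ L : ℝ, 1 ≤ z * L →
      c * Real.exp (-(L * poissonRate m z)) * L ^ (-(1 : ℝ) / 2) ≤
        (m * L) ^ ⌊z * L⌋₊ * Real.exp (-(m * L)) / (Nat.factorial ⌊z * L⌋₊) := by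
  refine ⟨Real.exp (-(|Real.log (z / m)| + 1)) / (Real.exp 1 * √z), by positivity,
    fun L hzL => ?_⟩
  have hL : 0 < L := pos_of_mul_pos_right (zero_lt_one.trans_le hzL) hz.le
  set x : ℕ := ⌊z * L⌋₊
  have hx : x ≠ 0 := (Nat.floor_pos.2 hzL).ne'
  have hx_le : (x : ℝ) ≤ z * L := Nat.floor_le (by positivity)
  have hrate : poissonRate (m * L) x ≤ L * poissonRate m z + |Real.log (z / m)| + 1 := by
    have h := poissonRate_le_add_abs_log (mul_pos hm hL) (by positivity) hx_le
      (Nat.lt_floor_add_one _).le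
    rwa [poissonRate_mul_mul _ _ hL.ne', mul_div_mul_right _ _ hL.ne'] at h
  have hsqrt : √x ≤ √z * √L := Real.sqrt_mul hz.le L ▸ Real.sqrt_le_sqrt hx_le
  have hL_rpow : L ^ (-(1 : ℝ) / 2) = (√L)⁻¹ := by
    rw [Real.sqrt_eq_rpow, neg_div, Real.rpow_neg hL.le]
  calc Real.exp (-(|Real.log (z / m)| + 1)) / (Real.exp 1 * √z) *
          Real.exp (-(L * poissonRate m z)) * L ^ (-(1 : ℝ) / 2)
      = Real.exp (-(L * poissonRate m z + |Real.log (z / m)| + 1)) /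
          (Real.exp 1 * (√z * √L)) := by
        rw [hL_rpow, add_assoc, neg_add (L * _), Real.exp_add]
        field_simp
    _ ≤ Real.exp (-poissonRate (m * L) x) / (Real.exp 1 * √x) := by gcongr
    _ ≤ (m * L) ^ x * Real.exp (-(m * L)) / x.factorial :=
        exp_neg_poissonRate_div_le (mul_pos hm hL) hx

lemma exists_eventually_le_poissonPMF_floor {k : ℕ} {m z : Fin k → ℝ} (hm : ∀ i, 0 < m i)
    (hz : ∀ i, 0 < z i) :
    ∃ c : ℝ, 0 < c ∧ ∀ᶠ L : ℝ in atTop,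
      c * Real.exp (-(L * ∑ i, poissonRate (m i) (z i))) * L ^ (-(k : ℝ) / 2) ≤
        poissonPMF (fun i => m i * L) (fun i => ⌊z i * L⌋₊) := by
  choose c hc hle using fun i => exists_le_poisson_floor (hm i) (hz i)
  refine ⟨∏ i, c i, Finset.prod_pos fun i _ => hc i, ?_⟩
  have hzL : ∀ᶠ L : ℝ in atTop, ∀ i, 1 ≤ z i * L :=
    eventually_all.2 fun i => (tendsto_id.const_mul_atTop (hz i)).eventually_ge_atTop 1
  filter_upwards [eventually_gt_atTop 0, hzL] with L hL hzL
  have hprod : (∏ i, c i) * Real.exp (-(L * ∑ i, poissonRate (m i) (z i))) * L ^ (-(k : ℝ) / 2) =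
      ∏ i, c i * Real.exp (-(L * poissonRate (m i) (z i))) * L ^ (-(1 : ℝ) / 2) := by
    rw [Finset.prod_mul_distrib, Finset.prod_mul_distrib, Finset.mul_sum,
      ← Finset.sum_neg_distrib, Real.exp_sum, Finset.prod_const, Finset.card_univ,
      Fintype.card_fin, ← Real.rpow_mul_natCast hL.le]
    ring_nf
  rw [hprod]
  exact Finset.prod_le_prod (fun i _ => by have := hc i; positivity) fun i _ => hle i L (hzL i)

end PoissonLowerBound

section Summability

lemma summable_fintype_prod_of_nonneg {ι : Type*} [Fintype ι] {κ : ι → Type*}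
    {f : ∀ i, κ i → ℝ} (hf_nonneg : ∀ i j, 0 ≤ f i j) (hf : ∀ i, Summable (f i)) :
    Summable fun x : ∀ i, κ i => ∏ i, f i (x i) := by
  classical
  have hprod_nonneg (x : ∀ i, κ i) : 0 ≤ ∏ i, f i (x i) :=
    Finset.prod_nonneg fun i _ => hf_nonneg i _
  refine summable_of_sum_le (c := ∏ i, ∑' j, f i j) hprod_nonneg fun u => ?_
  have hu : u ⊆ Fintype.piFinset fun i => u.image fun x => x i := fun x hx =>
    Fintype.mem_piFinset.2 fun _ => Finset.mem_image_of_mem _ hx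
  calc ∑ x ∈ u, ∏ i, f i (x i)
      ≤ ∑ x ∈ Fintype.piFinset fun i => u.image fun x => x i, ∏ i, f i (x i) :=
        Finset.sum_le_sum_of_subset_of_nonneg hu fun x _ _ => hprod_nonneg x
    _ = ∏ i, ∑ j ∈ u.image fun x => x i, f i j := (Finset.prod_univ_sum _ _).symm
    _ ≤ ∏ i, ∑' j, f i j :=
        Finset.prod_le_prod (fun i _ => Finset.sum_nonneg fun j _ => hf_nonneg i j)
          fun i _ => (hf i).sum_le_tsum _ fun j _ => hf_nonneg i j

variable {k : ℕ} {lam lam₁ lam₂ : Fin k → ℝ}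

lemma poissonPMF_nonneg (hlam : ∀ i, 0 ≤ lam i) (x : Fin k → ℕ) : 0 ≤ poissonPMF lam x :=
  Finset.prod_nonneg fun i _ => by have := hlam i; positivity

lemma summable_poissonPMF (hlam : ∀ i, 0 ≤ lam i) : Summable (poissonPMF lam) := by
  have hnonneg (i : Fin k) (j : ℕ) :
      0 ≤ lam i ^ j * Real.exp (-lam i) / (Nat.factorial j) := by
    have := hlam i
    positivity
  have hsummable (i : Fin k) :
      Summable fun j : ℕ => lam i ^ j * Real.exp (-lam i) / (Nat.factorial j) := by
    simpa only [div_mul_eq_mul_div] using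
      (Real.summable_pow_div_factorial (lam i)).mul_right (Real.exp (-lam i))
  exact summable_fintype_prod_of_nonneg
    (f := fun i j => lam i ^ j * Real.exp (-lam i) / (Nat.factorial j)) hnonneg hsummable

lemma min_poissonPMF_le_tsum (hlam₁ : ∀ i, 0 ≤ lam₁ i) (hlam₂ : ∀ i, 0 ≤ lam₂ i)
    {p₁ p₂ : ℝ} (hp₁ : 0 ≤ p₁) (hp₂ : 0 ≤ p₂) (x : Fin k → ℕ) :
    min (p₁ * poissonPMF lam₁ x) (p₂ * poissonPMF lam₂ x) ≤
      ∑' y, min (p₁ * poissonPMF lam₁ y) (p₂ * poissonPMF lam₂ y) := by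
  have hnonneg (y) : 0 ≤ min (p₁ * poissonPMF lam₁ y) (p₂ * poissonPMF lam₂ y) :=
    le_min (mul_nonneg hp₁ (poissonPMF_nonneg hlam₁ y))
      (mul_nonneg hp₂ (poissonPMF_nonneg hlam₂ y))
  have hsum : Summable fun y => min (p₁ * poissonPMF lam₁ y) (p₂ * poissonPMF lam₂ y) :=
    ((summable_poissonPMF hlam₁).mul_left p₁).of_nonneg_of_le hnonneg fun _ => min_le_left _ _
  exact hsum.le_tsum x fun y _ => hnonneg y

end Summability

lemma exists_eventually_le_tsum_min_poissonPMF {k : ℕ} {c₁ c₂ z : Fin k → ℝ}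
    (hc₁ : ∀ i, 0 < c₁ i) (hc₂ : ∀ i, 0 < c₂ i) (hz : ∀ i, 0 < z i)
    {p₁ p₂ D : ℝ} (hp₁ : 0 < p₁) (hp₂ : 0 < p₂)
    (hD₁ : ∑ i, poissonRate (c₁ i) (z i) ≤ D) (hD₂ : ∑ i, poissonRate (c₂ i) (z i) ≤ D) :
    ∃ c : ℝ, 0 < c ∧ ∀ᶠ L : ℝ in atTop,
      c * Real.exp (-(L * D)) * L ^ (-(k : ℝ) / 2) ≤
        ∑' x, min (p₁ * poissonPMF (fun i => c₁ i * L) x)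
          (p₂ * poissonPMF (fun i => c₂ i * L) x) := by
  obtain ⟨a₁, ha₁, hle₁⟩ := exists_eventually_le_poissonPMF_floor hc₁ hz
  obtain ⟨a₂, ha₂, hle₂⟩ := exists_eventually_le_poissonPMF_floor hc₂ hz
  refine ⟨min (p₁ * a₁) (p₂ * a₂), by positivity, ?_⟩
  filter_upwards [eventually_gt_atTop 0, hle₁, hle₂] with L hL hle₁ hle₂
  have scaled_le {p a S q : ℝ} (hp : 0 < p) (ha : 0 < a) (hS : S ≤ D)
      (hmin : min (p₁ * a₁) (p₂ * a₂) ≤ p * a)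
      (hq : a * Real.exp (-(L * S)) * L ^ (-(k : ℝ) / 2) ≤ q) :
      min (p₁ * a₁) (p₂ * a₂) * Real.exp (-(L * D)) * L ^ (-(k : ℝ) / 2) ≤ p * q :=
    calc min (p₁ * a₁) (p₂ * a₂) * Real.exp (-(L * D)) * L ^ (-(k : ℝ) / 2)
        ≤ p * a * Real.exp (-(L * S)) * L ^ (-(k : ℝ) / 2) := by gcongr
      _ = p * (a * Real.exp (-(L * S)) * L ^ (-(k : ℝ) / 2)) := by ring
      _ ≤ p * q := by gcongr
  exact (le_min (scaled_le hp₁ ha₁ hD₁ (min_le_left _ _) hle₁)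
    (scaled_le hp₂ ha₂ hD₂ (min_le_right _ _) hle₂)).trans
    (min_poissonPMF_le_tsum (fun i => (mul_pos (hc₁ i) hL).le)
      (fun i => (mul_pos (hc₂ i) hL).le) hp₁.le hp₂.le _)

section CHDivergence

/-- The weighted geometric mean `a ^ t * b ^ (1 - t)`: the point at which the Poisson distributions
of means `a` and `b` are compared. -/
noncomputable def geomInterp (a b t : ℝ) : ℝ := a ^ t * b ^ (1 - t)

/-- The contribution of one coordinate to the function of `t` maximized in `CHdiv`. -/
noncomputable def chTerm (a b t : ℝ) : ℝ := t * a + (1 - t) * b - geomInterp a b t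

/-- The derivative of `chTerm a b` at `t`, for positive `a` and `b`. -/
noncomputable def chSlope (a b t : ℝ) : ℝ :=
  a - b - geomInterp a b t * (Real.log a - Real.log b)

section Scalar

variable {a b : ℝ}

lemma geomInterp_pos (ha : 0 < a) (hb : 0 < b) (t : ℝ) : 0 < geomInterp a b t :=
  mul_pos (Real.rpow_pos_of_pos ha _) (Real.rpow_pos_of_pos hb _)

lemma log_geomInterp (ha : 0 < a) (hb : 0 < b) (t : ℝ) :
    Real.log (geomInterp a b t) = t * Real.log a + (1 - t) * Real.log b := by
  rw [geomInterp, Real.log_mul (Real.rpow_pos_of_pos ha _).ne' (Real.rpow_pos_of_pos hb _).ne',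
    Real.log_rpow ha, Real.log_rpow hb]

lemma hasDerivAt_chTerm (ha : 0 < a) (hb : 0 < b) (t : ℝ) :
    HasDerivAt (chTerm a b) (chSlope a b t) t := by
  have hsub : HasDerivAt (fun s : ℝ => 1 - s) (-1) t := (hasDerivAt_id t).const_sub 1
  have hgeom := ((hasDerivAt_id t).const_rpow ha).mul (hsub.const_rpow hb)
  refine ((((hasDerivAt_id t).mul_const a).add (hsub.mul_const b)).sub hgeom).congr_deriv ?_
  simp only [chSlope, geomInterp, id_eq]
  ring

lemma poissonRate_left_geomInterp (ha : 0 < a) (hb : 0 < b) (t : ℝ) :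
    poissonRate a (geomInterp a b t) = chTerm a b t + (1 - t) * chSlope a b t := by
  rw [poissonRate, Real.log_div (geomInterp_pos ha hb t).ne' ha.ne', log_geomInterp ha hb,
    chTerm, chSlope]
  ring

lemma poissonRate_right_geomInterp (ha : 0 < a) (hb : 0 < b) (t : ℝ) :
    poissonRate b (geomInterp a b t) = chTerm a b t - t * chSlope a b t := by
  rw [poissonRate, Real.log_div (geomInterp_pos ha hb t).ne' hb.ne', log_geomInterp ha hb,
    chTerm, chSlope]
  ring

end Scalar

lemma exists_sum_chSlope_eq_zero {ι : Type*} [Fintype ι] {c₁ c₂ : ι → ℝ}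
    (hc₁ : ∀ i, 0 < c₁ i) (hc₂ : ∀ i, 0 < c₂ i) :
    ∃ t ∈ Set.Ioo (0 : ℝ) 1, ∑ i, chSlope (c₁ i) (c₂ i) t = 0 := by
  have hderiv (t : ℝ) : HasDerivAt (fun s => ∑ i, chTerm (c₁ i) (c₂ i) s)
      (∑ i, chSlope (c₁ i) (c₂ i) t) t :=
    HasDerivAt.fun_sum fun i _ => hasDerivAt_chTerm (hc₁ i) (hc₂ i) t
  exact exists_hasDerivAt_eq_zero zero_lt_one
    (fun t _ => (hderiv t).continuousAt.continuousWithinAt)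
    (by simp [chTerm, geomInterp]) fun t _ => hderiv t

variable {k : ℕ} {c₁ c₂ : Fin k → ℝ}

lemma sum_chTerm_le_CHdiv (hc₁ : ∀ i, 0 < c₁ i) (hc₂ : ∀ i, 0 < c₂ i) {t : ℝ}
    (ht : t ∈ Set.Icc (0 : ℝ) 1) : ∑ i, chTerm (c₁ i) (c₂ i) t ≤ CHdiv c₁ c₂ := by
  have hcont : Continuous fun s => ∑ i, chTerm (c₁ i) (c₂ i) s :=
    continuous_finsetSum _ fun i _ => continuous_iff_continuousAt.2 fun s =>
      (hasDerivAt_chTerm (hc₁ i) (hc₂ i) s).continuousAt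
  exact le_csSup (isCompact_Icc.image hcont).bddAbove ⟨t, ht, rfl⟩

lemma exists_sum_poissonRate_le_CHdiv (hc₁ : ∀ i, 0 < c₁ i) (hc₂ : ∀ i, 0 < c₂ i) :
    ∃ z : Fin k → ℝ, (∀ i, 0 < z i) ∧
      ∑ i, poissonRate (c₁ i) (z i) ≤ CHdiv c₁ c₂ ∧
      ∑ i, poissonRate (c₂ i) (z i) ≤ CHdiv c₁ c₂ := by
  obtain ⟨t, ht, hslope⟩ := exists_sum_chSlope_eq_zero hc₁ hc₂
  have hle := sum_chTerm_le_CHdiv hc₁ hc₂ (Set.Ioo_subset_Icc_self ht)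
  refine ⟨fun i => geomInterp (c₁ i) (c₂ i) t, fun i => geomInterp_pos (hc₁ i) (hc₂ i) t, ?_, ?_⟩
  · simpa only [poissonRate_left_geomInterp (hc₁ _) (hc₂ _), Finset.sum_add_distrib,
      ← Finset.mul_sum, hslope, mul_zero, add_zero] using hle
  · simpa only [poissonRate_right_geomInterp (hc₁ _) (hc₂ _), Finset.sum_sub_distrib,
      ← Finset.mul_sum, hslope, mul_zero, sub_zero] using hle

end CHDivergence

theorem statement_1 (k : ℕ) (hk : 1 ≤ k) (c₁ c₂ : Fin k → ℝ)
    (hc₁ : ∀ i, 0 < c₁ i) (hc₂ : ∀ i, 0 < c₂ i) (hne : c₁ ≠ c₂)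
    (p₁ p₂ : ℝ) (hp₁ : 0 < p₁) (hp₂ : 0 < p₂) :
    ∃ c : ℝ, 0 < c ∧ ∃ n₀ : ℕ, ∀ n : ℕ, n₀ ≤ n →
      c * (n : ℝ) ^ (-CHdiv c₁ c₂) * Real.log n ^ (-(k : ℝ) / 2)
        ≤ ∑' x : Fin k → ℕ,
            min (p₁ * poissonPMF (fun i => c₁ i * Real.log n) x)
                (p₂ * poissonPMF (fun i => c₂ i * Real.log n) x) := by
  obtain ⟨z, hz, hD₁, hD₂⟩ := exists_sum_poissonRate_le_CHdiv hc₁ hc₂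
  obtain ⟨c, hc, hbound⟩ :=
    exists_eventually_le_tsum_min_poissonPMF hc₁ hc₂ hz hp₁ hp₂ hD₁ hD₂
  have hlog : Tendsto (fun n : ℕ => Real.log n) atTop atTop :=
    Real.tendsto_log_atTop.comp tendsto_natCast_atTop_atTop
  obtain ⟨n₀, hn₀⟩ := eventually_atTop.1 ((hlog.eventually hbound).and (eventually_gt_atTop 0))
  refine ⟨c, hc, n₀, fun n hn => ?_⟩
  obtain ⟨hle, hn_pos⟩ := hn₀ n hn
  rwa [Real.rpow_def_of_pos (Nat.cast_pos.2 hn_pos), mul_neg]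
end

section
/- Let X be a countable set, k ≥ 2, let P₁,...,P_k : X → [0,1] be probability mass functions on X, and let p₁,...,p_k > 0 with ∑_{j=1}^k p_j = 1. Then for EVERY function f : X → {1,...,k}, the error probability ∑_{i=1}^k p_i ∑_{x : f(x) ≠ i} P_i(x) is at least (1/(k−1)) · ∑_{1 ≤ i < j ≤ k} ∑_{x ∈ X} min(p_i P_i(x), p_j P_j(x)). -/
open scoped BigOperators

/-!
A decision rule that is right at `x` under hypothesis `i` is wrong there under every `j ≠ i`, so for
each pair `i ≠ j` the overlap `∑ₓ min (wᵢ x) (wⱼ x)` of the weighted masses `wᵢ = pᵢ Pᵢ` is at most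
the sum of the errors made under `i` and `j`. Summing over the pairs counts every error `k - 1`
times.
-/

theorem sum_sum_lt_add_eq_nsmul_sum {ι M : Type*} [Fintype ι] [LinearOrder ι] [AddCommMonoid M]
    (b : ι → M) :
    ∑ i, ∑ j, (if i < j then b i + b j else 0) = (Fintype.card ι - 1) • ∑ i, b i := by
  have hoffDiag (i j : ι) :
      ((if i < j then b i else 0) + if j < i then b i else 0) =
        if j ∈ ({i}ᶜ : Finset ι) then b i else 0 := by
    rcases lt_trichotomy i j with h | rfl | h
    · simp [h, h.ne', h.not_gt]
    · simp
    · simp [h, h.ne, h.not_gt]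
  calc ∑ i, ∑ j, (if i < j then b i + b j else 0)
      = ∑ i, ∑ j, (if i < j then b i else 0) + ∑ i, ∑ j, (if i < j then b j else 0) := by
        simp only [← Finset.sum_add_distrib, ite_add_ite, add_zero]
    _ = ∑ i, ∑ j, (if i < j then b i else 0) + ∑ i, ∑ j, (if j < i then b i else 0) := by
        rw [Finset.sum_comm (f := fun i j ↦ if i < j then b j else 0)]
    _ = ∑ i, ∑ _j ∈ {i}ᶜ, b i := by
        simp only [← Finset.sum_add_distrib, hoffDiag, Finset.sum_ite_mem, Finset.univ_inter]
    _ = (Fintype.card ι - 1) • ∑ i, b i := by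
        simp only [Finset.sum_const, Finset.card_compl, Finset.card_singleton, Finset.smul_sum]

theorem summable_of_tsum_ne_zero {X α : Type*} [AddCommMonoid α] [TopologicalSpace α]
    {u : X → α} (hu : ∑' x, u x ≠ 0) : Summable u :=
  not_imp_comm.1 tsum_eq_zero_of_not_summable hu

theorem summable_ite_zero {X α : Type*} [AddCommGroup α] [UniformSpace α]
    [IsUniformAddGroup α] [CompleteSpace α] {u : X → α} (hu : Summable u)
    (q : X → Prop) [DecidablePred q] :
    Summable fun x ↦ if q x then u x else 0 := by
  refine (hu.indicator {x | q x}).congr fun x ↦ ?_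
  simp [Set.indicator_apply]

section Overlap

variable {ι X : Type*} [DecidableEq ι]

theorem min_le_ite_ne_add_ite_ne {α : Type*} [AddCommMonoid α] [LinearOrder α]
    [IsOrderedAddMonoid α] (a : α) {b : α} (hb : 0 ≤ b) {i j : ι} (hij : i ≠ j) (m : ι) :
    min a b ≤ (if m ≠ i then a else 0) + (if m ≠ j then b else 0) := by
  by_cases hmi : m = i
  · simp [hmi, hij]
  · calc min a b ≤ a := min_le_left a b
      _ ≤ a + (if m ≠ j then b else 0) := le_add_of_nonneg_right (by split_ifs <;> simp [hb])
      _ = _ := by rw [if_pos hmi]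

theorem tsum_min_le_tsum_ite_ne_add_tsum_ite_ne {u v : X → ℝ} (hu0 : ∀ x, 0 ≤ u x)
    (hv0 : ∀ x, 0 ≤ v x) (hu : Summable u) (hv : Summable v) (f : X → ι) {i j : ι} (hij : i ≠ j) :
    ∑' x, min (u x) (v x) ≤
      (∑' x, if f x ≠ i then u x else 0) + ∑' x, if f x ≠ j then v x else 0 := by
  have hmin : Summable fun x ↦ min (u x) (v x) :=
    hu.of_nonneg_of_le (fun x ↦ le_min (hu0 x) (hv0 x)) fun x ↦ min_le_left _ _
  have hfi : Summable fun x ↦ if f x ≠ i then u x else 0 := summable_ite_zero hu _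
  have hfj : Summable fun x ↦ if f x ≠ j then v x else 0 := summable_ite_zero hv _
  rw [← hfi.tsum_add hfj]
  exact hmin.tsum_le_tsum (fun x ↦ min_le_ite_ne_add_ite_ne (u x) (hv0 x) hij (f x))
    (hfi.add hfj)

end Overlap

theorem statement_8_general {ι X : Type*} [Fintype ι] [LinearOrder ι] [Nontrivial ι]
    (w : ι → X → ℝ) (hw0 : ∀ i x, 0 ≤ w i x) (hw : ∀ i, Summable (w i)) (f : X → ι) :
    (1 / ((Fintype.card ι : ℝ) - 1)) *
        ∑ i, ∑ j, (if i < j then ∑' x, min (w i x) (w j x) else 0)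
      ≤ ∑ i, ∑' x, (if f x ≠ i then w i x else 0) := by
  let err : ι → ℝ := fun i ↦ ∑' x, if f x ≠ i then w i x else 0
  have hcard : (1 : ℝ) < Fintype.card ι := mod_cast Fintype.one_lt_card
  rw [one_div, inv_mul_le_iff₀ (sub_pos.2 hcard)]
  calc ∑ i, ∑ j, (if i < j then ∑' x, min (w i x) (w j x) else 0)
      ≤ ∑ i, ∑ j, (if i < j then err i + err j else 0) := by
        gcongr with i _ j _
        split_ifs with hij
        · exact tsum_min_le_tsum_ite_ne_add_tsum_ite_ne (hw0 i) (hw0 j) (hw i) (hw j) f hij.ne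
        · exact le_rfl
    _ = ((Fintype.card ι : ℝ) - 1) * ∑ i, err i := by
        rw [sum_sum_lt_add_eq_nsmul_sum, nsmul_eq_mul, Nat.cast_pred Fintype.card_pos]

theorem statement_8 (X : Type*) [Countable X] (k : ℕ) (hk : 2 ≤ k)
    (P : Fin k → X → ℝ) (hP0 : ∀ j x, 0 ≤ P j x) (hP1 : ∀ j x, P j x ≤ 1)
    (hPsum : ∀ j, ∑' x, P j x = 1)
    (p : Fin k → ℝ) (hp : ∀ j, 0 < p j) (hpsum : ∑ j, p j = 1)
    (f : X → Fin k) :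
    (1 / ((k : ℝ) - 1)) *
        ∑ i, ∑ j, (if i < j then ∑' x, min (p i * P i x) (p j * P j x) else 0)
      ≤ ∑ i, p i * ∑' x, (if f x ≠ i then P i x else 0) := by
  have : Nontrivial (Fin k) := Fin.nontrivial_iff_two_le.2 hk
  have hP (j : Fin k) : Summable (P j) := summable_of_tsum_ne_zero (by simp [hPsum j])
  simpa only [← tsum_mul_left, mul_ite, mul_zero, Fintype.card_fin] using
    statement_8_general (fun i x ↦ p i * P i x) (fun i x ↦ mul_nonneg (hp i).le (hP0 i x))
      (fun i ↦ (hP i).mul_left (p i)) f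
end
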